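/- (Strong duality part of Theorem 5.2.) Let F(·,t) : ℝⁿ × ℝⁿ ⇉ ℝⁿ be convex set-valued mappings for t ∈ [0,1], Q₀, Q₁ ⊆ ℝⁿ nonempty convex sets, and φ : ℝⁿ × ℝⁿ → ℝ convex and continuous. Let x̃ be a feasible trajectory of (P_C) and let x̃*, ṽ* : [0,1] → ℝⁿ (x̃*, x̃*' absolutely continuous with x̃*'' ∈ L¹, ṽ* absolutely continuous with ṽ*' ∈ L¹) satisfy, for a.e. t ∈ [0,1]: (a) (x̃*''(t) + ṽ*'(t), ṽ*(t)) ∈ F*(x̃*(t); (x̃(t), x̃'(t), x̃''(t)), t); (b) x̃''(t) ∈ F_A(x̃(t), x̃'(t), x̃*(t), t); (c) ṽ*(0) + x̃*'(0) ∈ K*_{Q₀}(x̃(0)) and −x̃*(0) ∈ K*_{Q₁}(x̃'(0)); (d) (ṽ*(1) + x̃*'(1), −x̃*(1)) ∈ ∂φ(x̃(1), x̃'(1)). Then t ↦ M_{F(·,t)}(x̃*''(t) + ṽ*'(t), ṽ*(t), x̃*(t)) is a.e. equal to an integrable function and −φ*(ṽ*(1) + x̃*'(1), −x̃*(1)) +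 ∫₀¹ M_{F(·,t)}(x̃*''(t) + ṽ*'(t), ṽ*(t), x̃*(t)) dt − W_{Q₀}(−ṽ*(0) − x̃*'(0)) − W_{Q₁}(x̃*(0)) = φ(x̃(1), x̃'(1)); in particular the optimal values of the primal problem (P_C) and its dual coincide. -/

import Mathlib

open scoped RealInnerProductSpace Pointwise
open MeasureTheory Matrix

noncomputable section

abbrev En (n : ℕ) := EuclideanSpace ℝ (Fin n)

/-- Fenchel conjugate of an extended-real-valued function on a product of two
inner product spaces (inner product of pairs is the sum of componentwise inner products). -/
def fconj2 {V W : Type*} [NormedAddCommGroup V] [InnerProductSpace ℝ V]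
    [NormedAddCommGroup W] [InnerProductSpace ℝ W]
    (g : V × W → EReal) (u : V) (w : W) : EReal :=
  ⨆ p : V × W, ((⟪p.1, u⟫ + ⟪p.2, w⟫ : ℝ) : EReal) - g p

/-- Fenchel conjugate on a triple product. -/
def fconj3 {V : Type*} [NormedAddCommGroup V] [InnerProductSpace ℝ V]
    (g : V × V × V → EReal) (u₁ u₂ u₃ : V) : EReal :=
  ⨆ p : V × V × V,
    ((⟪p.1, u₁⟫ + ⟪p.2.1, u₂⟫ + ⟪p.2.2, u₃⟫ : ℝ) : EReal) - g p

/-- Fenchel conjugate on a finite power of an inner product space. -/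
def fconjPi {N : ℕ} {V : Type*} [NormedAddCommGroup V] [InnerProductSpace ℝ V]
    (g : (Fin N → V) → EReal) (u : Fin N → V) : EReal :=
  ⨆ w : Fin N → V, ((∑ i, ⟪w i, u i⟫ : ℝ) : EReal) - g w

/-- Support function `W_A`. -/
def suppFn {V : Type*} [NormedAddCommGroup V] [InnerProductSpace ℝ V]
    (A : Set V) (u : V) : EReal :=
  ⨆ x ∈ A, ((⟪x, u⟫ : ℝ) : EReal)

/-- The function `M_F(x*,y*,z*) = inf {⟨x,x*⟩+⟨y,y*⟩-⟨z,z*⟩ : (x,y,z) ∈ gph F}`. -/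
def MF {V : Type*} [NormedAddCommGroup V] [InnerProductSpace ℝ V]
    (F : V → V → Set V) (x' y' z' : V) : EReal :=
  ⨅ (x : V) (y : V) (z : V) (_ : z ∈ F x y),
    ((⟪x, x'⟫ + ⟪y, y'⟫ - ⟪z, z'⟫ : ℝ) : EReal)

/-- Hamiltonian `H_F(x,y,z*) = sup {⟨z,z*⟩ : z ∈ F(x,y)}` (`⊥` if `F(x,y) = ∅`). -/
def HF {V : Type*} [NormedAddCommGroup V] [InnerProductSpace ℝ V]
    (F : V → V → Set V) (x y z' : V) : EReal :=
  ⨆ z ∈ F x y, ((⟪z, z'⟫ : ℝ) : EReal)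

/-- Locally adjoint mapping `F*(z*;(x,y,·))`. -/
def LAM {V : Type*} [NormedAddCommGroup V] [InnerProductSpace ℝ V]
    (F : V → V → Set V) (z' x y : V) : Set (V × V) :=
  {p | ∀ x₁ y₁ : V, HF F x₁ y₁ z' - HF F x y z' ≤
    ((⟪p.1, x₁ - x⟫ + ⟪p.2, y₁ - y⟫ : ℝ) : EReal)}

/-- Argmaximum set `F_A(x,y,z*)`. -/
def FA {V : Type*} [NormedAddCommGroup V] [InnerProductSpace ℝ V]
    (F : V → V → Set V) (x y z' : V) : Set V :=
  {z ∈ F x y | ((⟪z, z'⟫ : ℝ) : EReal) = HF F x y z'}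

/-- Subdifferential of an extended-real-valued function on a product of two spaces. -/
def subdiff2 {V W : Type*} [NormedAddCommGroup V] [InnerProductSpace ℝ V]
    [NormedAddCommGroup W] [InnerProductSpace ℝ W]
    (g : V × W → EReal) (u : V × W) : Set (V × W) :=
  {p | ∀ v : V × W,
    ((⟪p.1, v.1 - u.1⟫ + ⟪p.2, v.2 - u.2⟫ : ℝ) : EReal) ≤ g v - g u}

/-- Subdifferential of a real-valued function on a product of two spaces. -/
def subdiffR2 {V W : Type*} [NormedAddCommGroup V] [InnerProductSpace ℝ V]
    [NormedAddCommGroup W] [InnerProductSpace ℝ W]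
    (g : V × W → ℝ) (u : V × W) : Set (V × W) :=
  {p | ∀ v : V × W, ⟪p.1, v.1 - u.1⟫ + ⟪p.2, v.2 - u.2⟫ ≤ g v - g u}

/-- Dual cone to the cone of tangent directions of a convex set `Q` at `x₀`. -/
def Kstar {V : Type*} [NormedAddCommGroup V] [InnerProductSpace ℝ V]
    (Q : Set V) (x₀ : V) : Set V :=
  {x' | ∀ x ∈ Q, 0 ≤ ⟪x', x - x₀⟫}

/-- Graph of a set-valued mapping. -/
def gph {V : Type*} (F : V → V → Set V) : Set (V × V × V) :=
  {p | p.2.2 ∈ F p.1 p.2.1}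

/-- Convexity of an extended-real-valued function. -/
def ERealConvexOn {V : Type*} [AddCommGroup V] [Module ℝ V] (g : V → EReal) : Prop :=
  ∀ x y : V, ∀ a b : ℝ, 0 ≤ a → 0 ≤ b → a + b = 1 →
    g (a • x + b • y) ≤ (a : EReal) * g x + (b : EReal) * g y

/-- `g` is absolutely continuous on `[0,1]` with derivative `g' ∈ L¹`. -/
def AC {n : ℕ} (g g' : ℝ → En n) : Prop :=
  MeasureTheory.IntegrableOn g' (Set.Icc (0 : ℝ) 1) ∧
    ∀ t ∈ Set.Icc (0 : ℝ) 1, g t = g 0 + ∫ s in (0 : ℝ)..t, g' s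

/-- Feasible trajectory of the continuous problem `(P_C)`. -/
structure FeasTraj {n : ℕ} (F : ℝ → En n → En n → Set (En n)) (Q₀ Q₁ : Set (En n))
    (x x' x'' : ℝ → En n) : Prop where
  int' : MeasureTheory.IntegrableOn x' (Set.Icc (0 : ℝ) 1)
  int'' : MeasureTheory.IntegrableOn x'' (Set.Icc (0 : ℝ) 1)
  hx : ∀ t ∈ Set.Icc (0 : ℝ) 1, x t = x 0 + ∫ s in (0 : ℝ)..t, x' s
  hx' : ∀ t ∈ Set.Icc (0 : ℝ) 1, x' t = x' 0 + ∫ s in (0 : ℝ)..t, x'' s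
  incl : ∀ᵐ t ∂(MeasureTheory.volume.restrict (Set.Icc (0 : ℝ) 1)), x'' t ∈ F t (x t) (x' t)
  q0 : x 0 ∈ Q₀
  q1 : x' 0 ∈ Q₁

lemma aux_parts {f f' g g' : ℝ → ℝ}
    (hf' : IntegrableOn f' (Set.Icc (0 : ℝ) 1))
    (hf : ∀ t ∈ Set.Icc (0 : ℝ) 1, f t = f 0 + ∫ s in (0 : ℝ)..t, f' s)
    (hg' : IntegrableOn g' (Set.Icc (0 : ℝ) 1))
    (hg : ∀ t ∈ Set.Icc (0 : ℝ) 1, g t = g 0 + ∫ s in (0 : ℝ)..t, g' s) :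
    IntegrableOn (fun t => f' t * g t) (Set.Icc (0 : ℝ) 1) ∧
    IntegrableOn (fun t => f t * g' t) (Set.Icc (0 : ℝ) 1) ∧
    (∫ t in Set.Icc (0 : ℝ) 1, f' t * g t) + (∫ t in Set.Icc (0 : ℝ) 1, f t * g' t)
      = f 1 * g 1 - f 0 * g 0 := by
  have iif : IntervalIntegrable f' volume 0 1 :=
    (intervalIntegrable_iff_integrableOn_Icc_of_le zero_le_one).2 hf'
  have iig : IntervalIntegrable g' volume 0 1 :=
    (intervalIntegrable_iff_integrableOn_Icc_of_le zero_le_one).2 hg'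
  have key : ∀ {h h' : ℝ → ℝ}, IntervalIntegrable h' volume 0 1 →
      (∀ t ∈ Set.Icc (0 : ℝ) 1, h t = h 0 + ∫ s in (0 : ℝ)..t, h' s) →
      AbsolutelyContinuousOnInterval (fun t => h 0 + ∫ s in (0 : ℝ)..t, h' s) 0 1 ∧
      ∀ᵐ t, t ∈ Set.uIcc (0 : ℝ) 1 →
        deriv (fun t => h 0 + ∫ s in (0 : ℝ)..t, h' s) t = h' t := by
    intro h h' hi hh
    constructor
    · have h1 := hi.absolutelyContinuousOnInterval_intervalIntegral (c := 0) (by simp)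
      have h2 : AbsolutelyContinuousOnInterval (fun _ : ℝ => h 0) 0 1 :=
        contDiffOn_const.absolutelyContinuousOnInterval
      exact h2.add h1
    · filter_upwards [hi.ae_hasDerivAt_integral] with t ht htt
      exact ((ht htt 0 (by simp)).const_add (h 0)).deriv
  obtain ⟨acf, df⟩ := key iif hf
  obtain ⟨acg, dg⟩ := key iig hg
  have cf : ContinuousOn f (Set.Icc 0 1) := by
    have := acf.continuousOn
    rw [Set.uIcc_of_le zero_le_one] at this
    exact this.congr hf
  have cg : ContinuousOn g (Set.Icc 0 1) := by
    have := acg.continuousOn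
    rw [Set.uIcc_of_le zero_le_one] at this
    exact this.congr hg
  have i1 : IntegrableOn (fun t => f' t * g t) (Set.Icc (0 : ℝ) 1) :=
    hf'.mul_continuousOn cg isCompact_Icc
  have i2 : IntegrableOn (fun t => f t * g' t) (Set.Icc (0 : ℝ) 1) :=
    hg'.continuousOn_mul cf isCompact_Icc
  refine ⟨i1, i2, ?_⟩
  have := acf.integral_deriv_mul_eq_sub acg
  rw [← hf 1 (by simp), ← hg 1 (by simp), ← hf 0 (by simp), ← hg 0 (by simp)] at this
  rw [← this, ← integral_add i1 i2, integral_Icc_eq_integral_Ioc,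
    ← intervalIntegral.integral_of_le zero_le_one]
  apply intervalIntegral.integral_congr_ae
  filter_upwards [df, dg] with t h1 h2 ht
  have ht' := Set.uIoc_subset_uIcc ht
  have ht'' : t ∈ Set.Icc (0 : ℝ) 1 := by rwa [Set.uIcc_of_le zero_le_one] at ht'
  rw [h1 ht', h2 ht', ← hf t ht'', ← hg t ht'']

lemma AC.coord {n : ℕ} {g g' : ℝ → En n} (h : AC g g') (i : Fin n) :
    IntegrableOn (fun t => g' t i) (Set.Icc (0 : ℝ) 1) ∧
    ∀ t ∈ Set.Icc (0 : ℝ) 1, g t i = g 0 i + ∫ s in (0 : ℝ)..t, g' s i := by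
  let L : En n →L[ℝ] ℝ := EuclideanSpace.proj i
  refine ⟨L.integrable_comp h.1, fun t ht => ?_⟩
  have hi : IntervalIntegrable g' volume 0 t :=
    (intervalIntegrable_iff_integrableOn_Icc_of_le ht.1).2
      (h.1.mono_set (Set.Icc_subset_Icc_right ht.2))
  have := L.intervalIntegral_comp_comm hi
  have h2 : L (g t) = L (g 0) + L (∫ s in (0 : ℝ)..t, g' s) := by
    rw [h.2 t ht, map_add]
  rw [← this] at h2
  exact h2

lemma AC.parts {n : ℕ} {f f' g g' : ℝ → En n} (hf : AC f f') (hg : AC g g') :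
    IntegrableOn (fun t => (⟪f' t, g t⟫ : ℝ)) (Set.Icc (0 : ℝ) 1) ∧
    IntegrableOn (fun t => (⟪f t, g' t⟫ : ℝ)) (Set.Icc (0 : ℝ) 1) ∧
    (∫ t in Set.Icc (0 : ℝ) 1, (⟪f' t, g t⟫ : ℝ)) + (∫ t in Set.Icc (0 : ℝ) 1, (⟪f t, g' t⟫ : ℝ))
      = ⟪f 1, g 1⟫ - ⟪f 0, g 0⟫ := by
  have hI : ∀ a b : En n, (⟪a, b⟫ : ℝ) = ∑ i, a i * b i := by
    intro a b
    simp [PiLp.inner_apply, mul_comm]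
  simp only [hI]
  have A := fun i => aux_parts (hf.coord i).1 (hf.coord i).2 (hg.coord i).1 (hg.coord i).2
  refine ⟨integrable_finsetSum _ fun i _ => (A i).1,
    integrable_finsetSum _ fun i _ => (A i).2.1, ?_⟩
  rw [integral_finsetSum _ fun i _ => (A i).1, integral_finsetSum _ fun i _ => (A i).2.1,
    ← Finset.sum_add_distrib, ← Finset.sum_sub_distrib]
  exact Finset.sum_congr rfl fun i _ => (A i).2.2

/-- strong duality part of Theorem 5.2.  Here `xs, xs', xs''` stand
for `xt*, xt*', xt*''` and `vs, vs'` for `ṽ*, ṽ*'`. -/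
theorem stmt16 {n : ℕ}
    (F : ℝ → En n → En n → Set (En n))
    (hFconv : ∀ t ∈ Set.Icc (0 : ℝ) 1, Convex ℝ (gph (F t)))
    (Q₀ Q₁ : Set (En n)) (hQ₀c : Convex ℝ Q₀) (hQ₁c : Convex ℝ Q₁)
    (hQ₀ne : Q₀.Nonempty) (hQ₁ne : Q₁.Nonempty)
    (φ : En n × En n → ℝ) (hφconv : ConvexOn ℝ Set.univ φ) (hφcont : Continuous φ)
    (xt xt' xt'' : ℝ → En n) (hxt : FeasTraj F Q₀ Q₁ xt xt' xt'')
    (xs xs' xs'' vs vs' : ℝ → En n)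
    (hxsAC : AC xs xs') (hxs'AC : AC xs' xs'') (hvsAC : AC vs vs')
    (ha : ∀ᵐ t ∂(volume.restrict (Set.Icc (0 : ℝ) 1)),
      (xs'' t + vs' t, vs t) ∈ LAM (F t) (xs t) (xt t) (xt' t))
    (hb : ∀ᵐ t ∂(volume.restrict (Set.Icc (0 : ℝ) 1)),
      xt'' t ∈ FA (F t) (xt t) (xt' t) (xs t))
    (hc0 : vs 0 + xs' 0 ∈ Kstar Q₀ (xt 0))
    (hc1 : -(xs 0) ∈ Kstar Q₁ (xt' 0))
    (hd : (vs 1 + xs' 1, -(xs 1)) ∈ subdiffR2 φ (xt 1, xt' 1)) :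
    ∃ g : ℝ → ℝ, MeasureTheory.IntegrableOn g (Set.Icc (0 : ℝ) 1) ∧
      (∀ᵐ t ∂(volume.restrict (Set.Icc (0 : ℝ) 1)),
        MF (F t) (xs'' t + vs' t) (vs t) (xs t) = ((g t : ℝ) : EReal)) ∧
      -(fconj2 (fun p => ((φ p : ℝ) : EReal)) (vs 1 + xs' 1) (-(xs 1)))
          + (((∫ t in Set.Icc (0 : ℝ) 1, g t) : ℝ) : EReal)
          - suppFn Q₀ (-(vs 0) - xs' 0) - suppFn Q₁ (xs 0)
        = ((φ (xt 1, xt' 1) : ℝ) : EReal) := by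
  have hxAC : AC xt xt' := ⟨hxt.int', hxt.hx⟩
  have hx'AC : AC xt' xt'' := ⟨hxt.int'', hxt.hx'⟩
  obtain ⟨i1, i2, e1⟩ := hxAC.parts hxs'AC
  obtain ⟨j1, j2, e2⟩ := hxAC.parts hvsAC
  obtain ⟨k1, k2, e3⟩ := hx'AC.parts hxsAC
  refine ⟨fun t => (⟪xt t, xs'' t⟫ + ⟪xt t, vs' t⟫) + ⟪xt' t, vs t⟫ - ⟪xt'' t, xs t⟫,
    ((i2.add j2).add j1).sub k1, ?_, ?_⟩
  · filter_upwards [ha, hb] with t hat hbt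
    obtain ⟨hz, hH⟩ := hbt
    apply le_antisymm
    · refine (iInf_le _ (xt t)).trans <| (iInf_le _ (xt' t)).trans <|
        (iInf_le _ (xt'' t)).trans <| (iInf_le _ hz).trans ?_
      rw [inner_add_right]
    · refine le_iInf fun x => le_iInf fun y => le_iInf fun z => le_iInf fun hzz => ?_
      have h1 := hat x y
      rw [← hH] at h1
      have h2 : ((⟪z, xs t⟫ : ℝ) : EReal) ≤ HF (F t) x y (xs t) :=
        le_iSup₂ (f := fun z (_ : z ∈ F t x y) => ((⟪z, xs t⟫ : ℝ) : EReal)) z hzz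
      have h3 := (EReal.sub_le_sub h2 le_rfl).trans h1
      rw [← EReal.coe_sub, EReal.coe_le_coe_iff] at h3
      rw [EReal.coe_le_coe_iff]
      simp only [inner_sub_right, inner_add_left, inner_add_right, inner_sub_left] at h3 ⊢
      rw [real_inner_comm x (xs'' t), real_inner_comm x (vs' t), real_inner_comm y (vs t),
        real_inner_comm (xt t) (xs'' t), real_inner_comm (xt t) (vs' t),
        real_inner_comm (xt' t) (vs t)] at h3
      linarith
  · have hint : (∫ t in Set.Icc (0 : ℝ) 1,
        ((⟪xt t, xs'' t⟫ + ⟪xt t, vs' t⟫) + ⟪xt' t, vs t⟫ - ⟪xt'' t, xs t⟫ : ℝ))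
        = (⟪xt 1, vs 1 + xs' 1⟫ - ⟪xt' 1, xs 1⟫) - (⟪xt 0, vs 0 + xs' 0⟫ - ⟪xt' 0, xs 0⟫) := by
      rw [integral_sub, integral_add, integral_add]
      · simp only [inner_add_right]
        linarith
      exacts [i2, j2, i2.add j2, j1, (i2.add j2).add j1, k1]
    have hconj : fconj2 (fun p => ((φ p : ℝ) : EReal)) (vs 1 + xs' 1) (-(xs 1))
        = ((⟪xt 1, vs 1 + xs' 1⟫ - ⟪xt' 1, xs 1⟫ - φ (xt 1, xt' 1) : ℝ) : EReal) := by
      apply le_antisymm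
      · refine iSup_le fun p => ?_
        have := hd p
        rw [← EReal.coe_sub, EReal.coe_le_coe_iff]
        simp only [inner_sub_right, inner_neg_right, inner_neg_left] at this ⊢
        rw [real_inner_comm p.1, real_inner_comm p.2, real_inner_comm (xt 1),
          real_inner_comm (xt' 1)] at this
        linarith
      · refine le_iSup_of_le (xt 1, xt' 1) ?_
        rw [← EReal.coe_sub, EReal.coe_le_coe_iff]
        simp only [inner_neg_right]
        linarith
    have hs0 : suppFn Q₀ (-(vs 0) - xs' 0) = ((-⟪xt 0, vs 0 + xs' 0⟫ : ℝ) : EReal) := by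
      have e : -(vs 0) - xs' 0 = -(vs 0 + xs' 0) := by abel
      rw [e]
      apply le_antisymm
      · refine iSup₂_le fun x hx => ?_
        have := hc0 x hx
        rw [EReal.coe_le_coe_iff]
        rw [inner_neg_right]
        rw [inner_sub_right, real_inner_comm x, real_inner_comm (xt 0)] at this
        linarith
      · refine le_iSup₂_of_le (xt 0) hxt.q0 ?_
        rw [inner_neg_right]
    have hs1 : suppFn Q₁ (xs 0) = ((⟪xt' 0, xs 0⟫ : ℝ) : EReal) := by
      apply le_antisymm
      · refine iSup₂_le fun x hx => ?_
        have := hc1 x hx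
        rw [EReal.coe_le_coe_iff]
        rw [inner_neg_left, inner_sub_right, real_inner_comm x, real_inner_comm (xt' 0)] at this
        linarith
      · exact le_iSup₂_of_le (xt' 0) hxt.q1 le_rfl
    rw [hint, hconj, hs0, hs1, ← EReal.coe_neg, ← EReal.coe_add, ← EReal.coe_sub, ← EReal.coe_sub]
    congr 1
    ring
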